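/- Let Ω be an algebraic closure of F_2 and let d ≥ 2 be even. Fix x_0 ∈ Ω such that U_0 = F_2(x_0) has degree d over F_2 and Tr_{U_0/F_2}(x_0) ≠ 0. Let x_1, x_2, … ∈ Ω satisfy x_1^2 + x_1 = x_0 and x_i^2 + x_i = x_{i−1}^3 for all i ≥ 2. Then for every i ≥ 0 the element x_i generates F_2(x_0, …, x_i) over F_2, and [F_2(x_i) : F_2] = 2^i · d. -/

import Mathlib

open IntermediateField

/-!
Let `σ` be the Frobenius map over the constant field `K`, so that `[K(a) : K]` is the period of `a`
under `σ`. Suppose that `y` has degree `n` over `K`, even degree over `𝔽₂` and absolute trace one,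
and let `x ^ 2 + x = y`. The trace condition says that `σ^n` sends `x` to `x + 1`, so `x` has degree
`2 * n`. The cube `z = x ^ 3` satisfies `σ^n z = (x + 1) ^ 3 = z + (y + 1)`. A power of `σ` that
fixes `z` thus fixes `y`, hence is a power of `σ^n`, and `σ^n` moves `z` because `1`, unlike `y`,
has trace zero in even degree. Therefore `z` has degree `2 * n` as well and `K(z) = K(x)`. Summing
`z + σ^n z = y + 1` over the conjugates of `y` shows that `z` has absolute trace one, so `z` can
play the role of `y` one level higher in the tower.
-/

section Translation

open Function

lemma iterate_mul_eq_add_natCast_mul {R F : Type*} [Semiring R] [FunLike F R R]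
    [AddMonoidHomClass F R R] {σ : F} {a c : R} {n : ℕ} (ha : σ^[n] a = a + c)
    (hc : σ^[n] c = c) (k : ℕ) : σ^[n * k] a = a + k * c := by
  induction k with
  | zero => simp
  | succ k ih =>
    have hck : σ^[n * k] c = c := (IsPeriodicPt.mul_const (f := σ) hc k).eq
    rw [Nat.mul_succ, iterate_add_apply, ha, iterate_map_add, ih, hck,
      Nat.cast_succ, add_one_mul, add_assoc]

lemma minimalPeriod_eq_char_mul {R F : Type*} [Ring R] [NoZeroDivisors R] (p : ℕ) [CharP R p]
    [FunLike F R R] [AddMonoidHomClass F R R] {σ : F} {a c : R} {n : ℕ}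
    (hn : n ∣ minimalPeriod σ a) (ha : σ^[n] a = a + c) (hc : σ^[n] c = c) (hc0 : c ≠ 0) :
    minimalPeriod σ a = p * n := by
  have isPeriodicPt_iff (k : ℕ) : IsPeriodicPt σ (n * k) a ↔ p ∣ k := by
    rw [IsPeriodicPt, IsFixedPt, iterate_mul_eq_add_natCast_mul ha hc, add_eq_left, mul_eq_zero,
      or_iff_left hc0, CharP.cast_eq_zero_iff R p]
  rw [mul_comm]
  refine Nat.dvd_antisymm ((isPeriodicPt_iff p).2 dvd_rfl).minimalPeriod_dvd ?_
  obtain ⟨k, hk⟩ := hn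
  rw [hk]
  exact mul_dvd_mul_left n ((isPeriodicPt_iff k).1 (hk ▸ isPeriodicPt_minimalPeriod σ a))

variable {R F : Type*} [CommRing R] [CharP R 2]

lemma add_one_pow_three_of_charTwo (x : R) : (x + 1) ^ 3 = x ^ 3 + (x ^ 2 + x + 1) := by
  linear_combination (x ^ 2 + x) * CharTwo.two_eq_zero (R := R)

variable [IsDomain R] [FunLike F R R] [RingHomClass F R R] {σ : F} {x : R}

lemma minimalPeriod_artinSchreier_root
    (hx : σ^[minimalPeriod σ (x ^ 2 + x)] x = x + 1) :
    minimalPeriod σ x = 2 * minimalPeriod σ (x ^ 2 + x) := by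
  refine minimalPeriod_eq_char_mul 2 (IsPeriodicPt.minimalPeriod_dvd ?_) hx
    (iterate_map_one σ _) one_ne_zero
  rw [IsPeriodicPt, IsFixedPt, iterate_map_add, iterate_map_pow, iterate_minimalPeriod]

lemma minimalPeriod_artinSchreier_root_cube
    (hx : σ^[minimalPeriod σ (x ^ 2 + x)] x = x + 1) (hy : x ^ 2 + x ≠ 1) :
    minimalPeriod σ (x ^ 3) = 2 * minimalPeriod σ (x ^ 2 + x) := by
  set n := minimalPeriod σ (x ^ 2 + x)
  have iterate_cube : σ^[n] (x ^ 3) = x ^ 3 + (x ^ 2 + x + 1) := by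
    rw [iterate_map_pow, hx, add_one_pow_three_of_charTwo]
  have isPeriodicPt_of_cube {m : ℕ} (hm : IsPeriodicPt σ m (x ^ 3)) :
      IsPeriodicPt σ m (x ^ 2 + x) := by
    have := hm.apply_iterate n
    rw [iterate_cube, IsPeriodicPt, IsFixedPt, iterate_map_add, hm.eq, add_right_inj,
      iterate_map_add, iterate_map_one, add_left_inj] at this
    exact this
  refine minimalPeriod_eq_char_mul 2
    (isPeriodicPt_of_cube (isPeriodicPt_minimalPeriod σ _)).minimalPeriod_dvd iterate_cube ?_ ?_
  · rw [iterate_map_add, iterate_map_one, iterate_minimalPeriod]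
  · rwa [Ne, CharTwo.add_eq_zero]

end Translation

section FrobeniusSums

variable {R : Type*} [CommRing R]

lemma sum_range_pow_char_sub_self_pow (p : ℕ) [Fact p.Prime] [CharP R p] (x : R) (N : ℕ) :
    ∑ j ∈ Finset.range N, (x ^ p - x) ^ p ^ j = x ^ p ^ N - x := by
  simp_rw [sub_pow_char_pow, ← pow_mul, ← pow_succ']
  rw [Finset.sum_range_sub fun j ↦ x ^ p ^ j, pow_zero, pow_one]

lemma sum_range_sq_add_self_pow [CharP R 2] (x : R) (N : ℕ) :
    ∑ j ∈ Finset.range N, (x ^ 2 + x) ^ 2 ^ j = x ^ 2 ^ N + x := by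
  simpa only [CharTwo.sub_eq_add] using sum_range_pow_char_sub_self_pow 2 x N

lemma sum_range_two_mul_cube_pow [CharP R 2] {x : R} {N : ℕ} (hN : Even N)
    (hx : x ^ 2 ^ N = x + 1) : ∑ j ∈ Finset.range (2 * N), (x ^ 3) ^ 2 ^ j = 1 := by
  have cube_pow : (x ^ 3) ^ 2 ^ N = x ^ 3 + (x ^ 2 + x + 1) := by
    rw [pow_right_comm, hx, add_one_pow_three_of_charTwo]
  have pair (j : ℕ) :
      (x ^ 3) ^ 2 ^ j + (x ^ 3) ^ 2 ^ (N + j) = (x ^ 2 + x) ^ 2 ^ j + 1 := by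
    rw [pow_add 2, pow_mul, cube_pow, add_pow_char_pow (x ^ 3), CharTwo.add_cancel_left,
      add_pow_char_pow, one_pow]
  calc ∑ j ∈ Finset.range (2 * N), (x ^ 3) ^ 2 ^ j
      = ∑ j ∈ Finset.range N, ((x ^ 2 + x) ^ 2 ^ j + 1) := by
        rw [two_mul, Finset.sum_range_add, ← Finset.sum_add_distrib]
        exact Finset.sum_congr rfl fun j _ ↦ pair j
    _ = (x ^ 2 ^ N + x) + N := by
        rw [Finset.sum_add_distrib, sum_range_sq_add_self_pow]
        simp
    _ = 1 := by
        rw [hx, CharTwo.natCast_eq_ite, if_pos hN, add_zero, add_right_comm,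
          CharTwo.add_self_eq_zero, zero_add]

end FrobeniusSums

section FiniteConstantField

open FiniteField Function Module

lemma isIntegral_of_pow_eq_self (R : Type*) {A : Type*} [CommRing R] [Ring A] [Algebra R A] {a : A}
    {m : ℕ} (hm : 1 < m) (ha : a ^ m = a) : IsIntegral R a := by
  refine ⟨Polynomial.X ^ m - Polynomial.X, Polynomial.monic_X_pow_sub ?_, by simp [ha]⟩
  exact Polynomial.degree_X_le.trans_lt (by exact_mod_cast hm)

variable (K : Type*) {Ω : Type*} [Field K] [Field Ω] [Algebra K Ω]

lemma isPeriodicPt_frobeniusAlgHom_iff_finrank_dvd [Fintype K] {a : Ω} (ha : IsIntegral K a)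
    (m : ℕ) : IsPeriodicPt (frobeniusAlgHom K Ω) m a ↔ finrank K K⟮a⟯ ∣ m := by
  have := adjoin.finiteDimensional ha
  have : Finite K⟮a⟯ := Module.finite_of_finite K
  have coe_frobenius_pow_gen :
      ((frobeniusAlgHom K K⟮a⟯ ^ m) (AdjoinSimple.gen K a) : Ω) = (frobeniusAlgHom K Ω)^[m] a := by
    simp [AlgHom.coe_pow, coe_frobeniusAlgHom, pow_iterate]
  rw [← orderOf_frobeniusAlgHom K K⟮a⟯, orderOf_dvd_iff_pow_eq_one, IsPeriodicPt, IsFixedPt,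
    ← coe_frobenius_pow_gen]
  refine ⟨fun h ↦ adjoin_algHom_ext K fun z hz ↦ ?_, fun h ↦ by rw [h]; rfl⟩
  obtain rfl := Set.mem_singleton_iff.1 hz
  exact Subtype.ext h

lemma finrank_adjoin_simple_eq_minimalPeriod [Fintype K] (a : Ω) :
    finrank K K⟮a⟯ = minimalPeriod (frobeniusAlgHom K Ω) a := by
  by_cases ha : IsIntegral K a
  · exact Nat.dvd_antisymm
      ((isPeriodicPt_frobeniusAlgHom_iff_finrank_dvd K ha _).1 (isPeriodicPt_minimalPeriod _ a))
      ((isPeriodicPt_frobeniusAlgHom_iff_finrank_dvd K ha _).2 dvd_rfl).minimalPeriod_dvd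
  · have infinite : ¬ FiniteDimensional K K⟮a⟯ :=
      fun _ ↦ ha ((AdjoinSimple.isIntegral_gen K a).1 (.of_finite K _))
    rw [finrank_of_not_finite infinite, eq_comm, minimalPeriod_eq_zero_iff_notMem_periodicPts]
    rintro ⟨m, hm, hfix⟩
    rw [IsPeriodicPt, IsFixedPt, coe_frobeniusAlgHom, pow_iterate] at hfix
    exact ha (isIntegral_of_pow_eq_self K (Nat.one_lt_pow hm.ne' Fintype.one_lt_card) hfix)

lemma algebraMap_trace_gen_eq_sum_pow (k : Type*) [Field k] [Finite k] [Algebra k K] [Algebra k Ω]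
    [IsScalarTower k K Ω] (a : Ω) [FiniteDimensional k K⟮a⟯] :
    algebraMap k Ω (Algebra.trace k K⟮a⟯ (AdjoinSimple.gen K a)) =
      ∑ j ∈ Finset.range (finrank k K⟮a⟯), a ^ Nat.card k ^ j := by
  have : Finite K⟮a⟯ := Module.finite_of_finite k
  have algebraMap_eq_coe (c : k) : algebraMap k Ω c = (algebraMap k K⟮a⟯ c : Ω) := rfl
  rw [algebraMap_eq_coe, algebraMap_trace_eq_sum_pow]
  simp

end FiniteConstantField

section ArtinSchreierStep

open FiniteField Function Module

variable (K : Type*) {Ω : Type*} [Field K] [Algebra (ZMod 2) K] [Field Ω] [Algebra K Ω]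
  [Algebra (ZMod 2) Ω] [IsScalarTower (ZMod 2) K Ω]

/-- `K(a)` has even degree over `𝔽₂` and `a` has absolute trace one: the condition on the
right-hand side of `X ^ 2 + X = a` that propagates along a Cantor tower. Since the trace of an
infinite extension is `0` by convention, `K(a)` is a finite field. -/
structure EvenDegreeTraceOne (a : Ω) : Prop where
  even_finrank : Even (finrank (ZMod 2) K⟮a⟯)
  trace_eq_one : Algebra.trace (ZMod 2) K⟮a⟯ (AdjoinSimple.gen K a) = 1

namespace EvenDegreeTraceOne

variable {K}

lemma of_eq_adjoin {a : Ω} {E : IntermediateField K Ω} (hE : E = K⟮a⟯) (ha : a ∈ E)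
    (heven : Even (finrank (ZMod 2) E)) (htr : Algebra.trace (ZMod 2) E ⟨a, ha⟩ ≠ 0) :
    EvenDegreeTraceOne K a := by
  subst hE
  exact ⟨heven, Fin.eq_one_of_ne_zero _ htr⟩

lemma finiteDimensional {a : Ω} (h : EvenDegreeTraceOne K a) :
    FiniteDimensional (ZMod 2) K⟮a⟯ := by
  by_contra hinf
  simpa [Algebra.trace_eq_zero_of_not_exists_basis (ZMod 2)
    (fun ⟨_, ⟨b⟩⟩ ↦ hinf (Module.Finite.of_basis b))] using h.trace_eq_one

lemma finite_base {a : Ω} (h : EvenDegreeTraceOne K a) : Finite K :=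
  have := h.finiteDimensional
  have : Finite K⟮a⟯ := Module.finite_of_finite (ZMod 2)
  .of_injective _ (algebraMap K K⟮a⟯).injective

lemma ne_one {a : Ω} (h : EvenDegreeTraceOne K a) : a ≠ 1 := by
  rintro rfl
  have trace_one : Algebra.trace (ZMod 2) K⟮(1 : Ω)⟯ 1 = 0 := by
    rw [← map_one (algebraMap (ZMod 2) K⟮(1 : Ω)⟯), Algebra.trace_algebraMap, nsmul_one]
    exact (ZMod.natCast_eq_zero_iff_even).2 h.even_finrank
  exact zero_ne_one (trace_one.symm.trans h.trace_eq_one)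

variable {x : Ω}

lemma pow_two_pow_finrank_eq_add_one (h : EvenDegreeTraceOne K (x ^ 2 + x)) :
    x ^ 2 ^ finrank (ZMod 2) K⟮x ^ 2 + x⟯ = x + 1 := by
  have := charP_of_injective_algebraMap' (A := Ω) (ZMod 2) 2
  have := h.finiteDimensional
  have trace_eq := algebraMap_trace_gen_eq_sum_pow K (ZMod 2) (x ^ 2 + x)
  rw [h.trace_eq_one, map_one, Nat.card_zmod, sum_range_sq_add_self_pow] at trace_eq
  rw [CharTwo.add_eq_iff_eq_add.1 trace_eq.symm, add_comm]

lemma iterate_frobenius_eq_add_one [Fintype K] (h : EvenDegreeTraceOne K (x ^ 2 + x)) :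
    (frobeniusAlgHom K Ω)^[minimalPeriod (frobeniusAlgHom K Ω) (x ^ 2 + x)] x = x + 1 := by
  rw [← finrank_adjoin_simple_eq_minimalPeriod, coe_frobeniusAlgHom, pow_iterate,
    Module.card_eq_pow_finrank (K := ZMod 2), ZMod.card, ← pow_mul, finrank_mul_finrank]
  exact h.pow_two_pow_finrank_eq_add_one

lemma finrank_adjoin_root (h : EvenDegreeTraceOne K (x ^ 2 + x)) :
    finrank K K⟮x⟯ = 2 * finrank K K⟮x ^ 2 + x⟯ := by
  have := charP_of_injective_algebraMap' (A := Ω) (ZMod 2) 2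
  have := h.finite_base
  have := Fintype.ofFinite K
  simp_rw [finrank_adjoin_simple_eq_minimalPeriod]
  exact minimalPeriod_artinSchreier_root h.iterate_frobenius_eq_add_one

lemma finrank_adjoin_cube (h : EvenDegreeTraceOne K (x ^ 2 + x)) :
    finrank K K⟮x ^ 3⟯ = 2 * finrank K K⟮x ^ 2 + x⟯ := by
  have := charP_of_injective_algebraMap' (A := Ω) (ZMod 2) 2
  have := h.finite_base
  have := Fintype.ofFinite K
  simp_rw [finrank_adjoin_simple_eq_minimalPeriod]
  exact minimalPeriod_artinSchreier_root_cube h.iterate_frobenius_eq_add_one h.ne_one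

lemma finiteDimensional_adjoin_root (h : EvenDegreeTraceOne K (x ^ 2 + x)) :
    FiniteDimensional K K⟮x⟯ := by
  have := h.finiteDimensional
  have : FiniteDimensional K K⟮x ^ 2 + x⟯ := .right (ZMod 2) K _
  refine FiniteDimensional.of_finrank_pos ?_
  rw [h.finrank_adjoin_root]
  exact Nat.mul_pos two_pos finrank_pos

lemma adjoin_cube_eq_adjoin_root (h : EvenDegreeTraceOne K (x ^ 2 + x)) : K⟮x ^ 3⟯ = K⟮x⟯ :=
  have := h.finiteDimensional_adjoin_root
  eq_of_le_of_finrank_eq (adjoin_simple_le_iff.2 (pow_mem (mem_adjoin_simple_self K x) 3))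
    (h.finrank_adjoin_cube.trans h.finrank_adjoin_root.symm)

protected lemma cube (h : EvenDegreeTraceOne K (x ^ 2 + x)) : EvenDegreeTraceOne K (x ^ 3) := by
  have := charP_of_injective_algebraMap' (A := Ω) (ZMod 2) 2
  have finrank_cube :
      finrank (ZMod 2) K⟮x ^ 3⟯ = 2 * finrank (ZMod 2) K⟮x ^ 2 + x⟯ := by
    rw [← finrank_mul_finrank (ZMod 2) K K⟮x ^ 3⟯, h.finrank_adjoin_cube, mul_left_comm,
      finrank_mul_finrank]
  have : FiniteDimensional (ZMod 2) K⟮x ^ 3⟯ := by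
    have := h.finiteDimensional
    exact .of_finrank_pos (finrank_cube ▸ Nat.mul_pos two_pos finrank_pos)
  refine ⟨finrank_cube ▸ even_two_mul _, (algebraMap (ZMod 2) Ω).injective ?_⟩
  rw [algebraMap_trace_gen_eq_sum_pow, finrank_cube, Nat.card_zmod, map_one]
  exact sum_range_two_mul_cube_pow h.even_finrank h.pow_two_pow_finrank_eq_add_one

end EvenDegreeTraceOne

end ArtinSchreierStep

section Tower

open Module

/-- A Cantor tower over `x 0`: a sequence of successive Artin–Schreier roots whose right-hand sides
are `x 0` at the first level and `x i ^ 3` at level `i + 1` for `1 ≤ i`. -/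
structure IsCantorTower {R : Type*} [Semiring R] (x : ℕ → R) : Prop where
  one : x 1 ^ 2 + x 1 = x 0
  succ : ∀ i, 1 ≤ i → x (i + 1) ^ 2 + x (i + 1) = x i ^ 3

namespace IsCantorTower

variable {K Ω : Type*} [Field K] [Algebra (ZMod 2) K] [Field Ω] [Algebra K Ω]
  [Algebra (ZMod 2) Ω] [IsScalarTower (ZMod 2) K Ω] {x : ℕ → Ω}

lemma evenDegreeTraceOne (hx : IsCantorTower x) (h0 : EvenDegreeTraceOne K (x 0)) (i : ℕ) :
    EvenDegreeTraceOne K (x (i + 1) ^ 2 + x (i + 1)) := by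
  induction i with
  | zero => exact hx.one ▸ h0
  | succ i ih => exact hx.succ (i + 1) i.succ_pos ▸ ih.cube

lemma adjoin_sq_add_self (hx : IsCantorTower x) (h0 : EvenDegreeTraceOne K (x 0)) (i : ℕ) :
    K⟮x (i + 1) ^ 2 + x (i + 1)⟯ = K⟮x i⟯ := by
  cases i with
  | zero => rw [zero_add, hx.one]
  | succ i =>
    rw [hx.succ (i + 1) i.succ_pos]
    exact (hx.evenDegreeTraceOne h0 i).adjoin_cube_eq_adjoin_root

lemma finrank_adjoin (hx : IsCantorTower x) (h0 : EvenDegreeTraceOne K (x 0)) (i : ℕ) :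
    finrank K K⟮x i⟯ = 2 ^ i * finrank K K⟮x 0⟯ := by
  induction i with
  | zero => rw [pow_zero, one_mul]
  | succ i ih =>
    rw [(hx.evenDegreeTraceOne h0 i).finrank_adjoin_root, hx.adjoin_sq_add_self h0, ih, pow_succ',
      mul_assoc]

lemma monotone_adjoin (hx : IsCantorTower x) (h0 : EvenDegreeTraceOne K (x 0)) :
    Monotone fun i ↦ K⟮x i⟯ := by
  refine monotone_nat_of_le_succ fun i ↦ ?_
  have hmem := mem_adjoin_simple_self K (x (i + 1))
  rw [← hx.adjoin_sq_add_self h0 i, adjoin_simple_le_iff]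
  exact add_mem (pow_mem hmem 2) hmem

lemma adjoin_simple_eq_adjoin_image_Iic (hx : IsCantorTower x) (h0 : EvenDegreeTraceOne K (x 0))
    (i : ℕ) : K⟮x i⟯ = adjoin K (x '' Set.Iic i) := by
  refine le_antisymm (adjoin_simple_le_iff.2 (subset_adjoin K _ ⟨i, Set.self_mem_Iic, rfl⟩))
    (adjoin_le_iff.2 ?_)
  rintro _ ⟨j, hj, rfl⟩
  exact hx.monotone_adjoin h0 hj (mem_adjoin_simple_self K (x j))

end IsCantorTower

end Tower

theorem cantor_tower_char_two_even_degree_is_primitive_general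
    {K Ω : Type*} [Field K] [Algebra (ZMod 2) K] [Field Ω] [Algebra K Ω]
    [Algebra (ZMod 2) Ω] [IsScalarTower (ZMod 2) K Ω] (x : ℕ → Ω) (U : ℕ → IntermediateField K Ω)
    (hU : ∀ i, U i = IntermediateField.adjoin K (x '' Set.Iic i))
    (heven : Even (Module.finrank (ZMod 2) (U 0))) (hx0 : x 0 ∈ U 0)
    (htr0 : Algebra.trace (ZMod 2) (U 0) ⟨x 0, hx0⟩ ≠ 0)
    (hx1 : x 1 ^ 2 + x 1 = x 0)
    (hxi : ∀ i, 1 ≤ i → x (i + 1) ^ 2 + x (i + 1) = x i ^ 3) (i : ℕ) :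
    K⟮x i⟯ = U i ∧ Module.finrank K K⟮x i⟯ = 2 ^ i * Module.finrank K (U 0) := by
  have hU0 : U 0 = K⟮x 0⟯ := by
    rw [hU, show Set.Iic 0 = {0} from Set.Iic_bot, Set.image_singleton]
  have hx : IsCantorTower x := ⟨hx1, hxi⟩
  have h0 : EvenDegreeTraceOne K (x 0) := .of_eq_adjoin hU0 hx0 heven htr0
  exact ⟨(hx.adjoin_simple_eq_adjoin_image_Iic h0 i).trans (hU i).symm,
    hU0 ▸ hx.finrank_adjoin h0 i⟩

/-- Let `Ω` be an algebraic closure of `F_2` and let `d ≥ 2` be even. Fix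
`x_0 ∈ Ω` with `U_0 = F_2(x_0)` of degree `d` over `F_2` and `Tr_{U_0/F_2}(x_0) ≠ 0`. Let
`x_1, x_2, … ∈ Ω` satisfy `x_1² + x_1 = x_0` and `x_i² + x_i = x_{i−1}³` for all `i ≥ 2`.
Then for every `i ≥ 0` the element `x_i` generates `F_2(x_0, …, x_i)` over `F_2`, and
`[F_2(x_i) : F_2] = 2^i · d`. -/
theorem cantor_tower_char_two_even_degree_is_primitive
    (d : ℕ) (hd2 : 2 ≤ d) (hdeven : Even d)
    (Ω : Type*) [Field Ω] [Algebra (ZMod 2) Ω] [IsAlgClosure (ZMod 2) Ω]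
    (x : ℕ → Ω)
    (U : ℕ → IntermediateField (ZMod 2) Ω)
    (hU : ∀ i, U i = IntermediateField.adjoin (ZMod 2) (x '' Set.Iic i))
    (hdeg : Module.finrank (ZMod 2) ↥(U 0) = d)
    (hx0 : x 0 ∈ U 0)
    (htr0 : Algebra.trace (ZMod 2) ↥(U 0) ⟨x 0, hx0⟩ ≠ 0)
    (hx1 : x 1 ^ 2 + x 1 = x 0)
    (hxi : ∀ i, 1 ≤ i → x (i + 1) ^ 2 + x (i + 1) = x i ^ 3) :
    ∀ i, (ZMod 2)⟮x i⟯ = U i ∧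
      Module.finrank (ZMod 2) ↥((ZMod 2)⟮x i⟯) = 2 ^ i * d := by
  subst hdeg
  exact cantor_tower_char_two_even_degree_is_primitive_general x U hU hdeven hx0 htr0 hx1 hxi
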